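/- arXiv:1904.06068 — 2 statements merged into one kernel-verified Lean document; each statement's English description precedes it below -/
import Mathlib

section
/- Let f, g : (0,1) → ℝ be integrable with λ(|f|)·λ(|g|) integrable on (0,1). Then f·g ∈ L¹(0,1) and ∫₀¹ λ(s; f)·λ̌(s; g) ds ≤ ∫₀¹ f·g dm ≤ ∫₀¹ λ(s; f)·λ(s; g) ds, where λ̌(t; g) = λ((1−t)⁻; g) is the increasing rearrangement. -/
/-!
Replacing `f` and `g` by functions `F` and `G` with the same distributions changes only the joint
upper tails `μ {a < f, b < g}`. By the Fréchet-Hoeffding bounds these lie between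
`μ {a < f} + μ {b < g} - μ univ` and `min (μ {a < f}) (μ {b < g})`; the upper bound is attained when
`F` and `G` vary in the same direction, the lower one when they vary in opposite directions.
Splitting `f * g` into the four products of positive and negative parts, the layer cake formula
expresses the integral of each product through joint tails, so all four integrals move in the
favourable direction. The decreasing rearrangements of `f` and `g` vary in the same direction; the
increasing rearrangement of `g` is almost everywhere the reflection of the decreasing one, so it
also has the distribution of `g`.
-/

open MeasureTheory Set

/-- The decreasing rearrangement (spectral scale) of `f` on `(0,1)`. -/
noncomputable def rr (f : ℝ → ℝ) (t : ℝ) : ℝ :=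
  sInf {s : ℝ | volume {u ∈ Ioo (0:ℝ) 1 | s < f u} ≤ ENNReal.ofReal t}

/-- Hardy–Littlewood–Pólya majorisation `g ≺ f` on `(0,1)`. -/
def Maj (g f : ℝ → ℝ) : Prop :=
  (∀ s ∈ Ico (0:ℝ) 1, (∫ t in Ioo (0:ℝ) s, rr g t) ≤ ∫ t in Ioo (0:ℝ) s, rr f t) ∧
    (∫ t in Ioo (0:ℝ) 1, rr g t) = ∫ t in Ioo (0:ℝ) 1, rr f t

/-- The orbit `Ω(y)` of all integrable functions on `(0,1)` majorised by `y`. -/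
def Omega (y : ℝ → ℝ) : Set (ℝ → ℝ) :=
  {x | IntegrableOn x (Ioo (0:ℝ) 1) ∧ Maj x y}

/-- `x` is an extreme point of the convex set `Ω` (functions identified a.e. on `(0,1)`). -/
def ExtremePt (Ω : Set (ℝ → ℝ)) (x : ℝ → ℝ) : Prop :=
  x ∈ Ω ∧ ∀ x₁ ∈ Ω, ∀ x₂ ∈ Ω,
    (∀ᵐ u ∂(volume.restrict (Ioo (0:ℝ) 1)), x u = (x₁ u + x₂ u) / 2) →
    (∀ᵐ u ∂(volume.restrict (Ioo (0:ℝ) 1)), x₁ u = x₂ u)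

/-- The increasing rearrangement `λ̌(t; f) = λ((1−t)⁻; f)`, the left limit of the
decreasing rearrangement at `1 - t` (for a decreasing function this is the infimum
of its values on `(0, 1-t)`). -/
noncomputable def rrCheck (f : ℝ → ℝ) (t : ℝ) : ℝ :=
  sInf (rr f '' Ioo (0:ℝ) (1 - t))

open ProbabilityTheory Filter Topology
open scoped ENNReal

section LayerCake

variable {α : Type*} [MeasurableSpace α] {μ : Measure α} {f g : α → ℝ}

lemma lintegral_ofReal_eq_lintegral_measure_lt (hf : AEMeasurable f μ) :
    ∫⁻ x, ENNReal.ofReal (f x) ∂μ = ∫⁻ a in Ioi (0 : ℝ), μ {x | a < f x} := by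
  have hcake := lintegral_eq_lintegral_meas_lt μ (f := fun x => max (f x) 0)
    (ae_of_all _ fun _ => le_max_right _ _) (hf.max aemeasurable_const)
  calc
    _ = ∫⁻ x, ENNReal.ofReal (max (f x) 0) ∂μ := by simp [ENNReal.ofReal_max]
    _ = ∫⁻ a in Ioi (0 : ℝ), μ {x | a < max (f x) 0} := hcake
    _ = _ := setLIntegral_congr_fun measurableSet_Ioi fun a (ha : 0 < a) => by
      simp [ha.not_gt]

lemma lintegral_ofReal_mul_ofReal_eq_lintegral_measure_lt [SFinite μ] (hf : AEMeasurable f μ)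
    (hg : AEMeasurable g μ) :
    ∫⁻ x, ENNReal.ofReal (f x) * ENNReal.ofReal (g x) ∂μ =
      ∫⁻ a in Ioi (0 : ℝ), ∫⁻ b in Ioi (0 : ℝ), μ {x | a < f x ∧ b < g x} := by
  set ρ := μ.withDensity fun x => ENNReal.ofReal (g x)
  calc
    _ = ∫⁻ x, ENNReal.ofReal (f x) ∂ρ := by
      rw [lintegral_withDensity_eq_lintegral_mul₀ hg.ennreal_ofReal hf.ennreal_ofReal]
      simp only [Pi.mul_apply, mul_comm]
    _ = ∫⁻ a in Ioi (0 : ℝ), ρ {x | a < f x} :=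
      lintegral_ofReal_eq_lintegral_measure_lt (hf.mono_ac (withDensity_absolutelyContinuous _ _))
    _ = _ := lintegral_congr fun a => by
      rw [withDensity_apply', lintegral_ofReal_eq_lintegral_measure_lt hg.restrict]
      refine lintegral_congr fun b => ?_
      rw [Measure.restrict_apply₀ (nullMeasurableSet_lt aemeasurable_const hg.restrict),
        inter_comm]
      rfl

end LayerCake

lemma ofReal_mul_eq_ofReal_mul_ofReal_add (x y : ℝ) :
    ENNReal.ofReal (x * y) = ENNReal.ofReal x * ENNReal.ofReal y +
      ENNReal.ofReal (-x) * ENNReal.ofReal (-y) := by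
  rcases le_total 0 x with hx | hx
  · rw [ENNReal.ofReal_of_nonpos (neg_nonpos.2 hx), zero_mul, add_zero, ENNReal.ofReal_mul hx]
  · rw [ENNReal.ofReal_of_nonpos hx, zero_mul, zero_add, ← ENNReal.ofReal_mul (neg_nonneg.2 hx),
      neg_mul_neg]

section FrechetHoeffding

variable {α : Type*} [MeasurableSpace α] {μ : Measure α} {f g : α → ℝ} {s : Set α}

lemma measure_lt_add_measure_lt_sub_le (hg : AEMeasurable g μ) (a b : ℝ) :
    μ {x | a < f x} + μ {x | b < g x} - μ univ ≤ μ {x | a < f x ∧ b < g x} := by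
  rw [tsub_le_iff_left,
    ← measure_union_add_inter₀ _ (nullMeasurableSet_lt aemeasurable_const hg)]
  exact add_le_add_left (measure_mono (subset_univ _)) _

lemma min_measure_lt_le_of_monovaryOn (hfg : MonovaryOn f g s) (hs : ∀ᵐ x ∂μ, x ∈ s) (a b : ℝ) :
    min (μ {x | a < f x}) (μ {x | b < g x}) ≤ μ {x | a < f x ∧ b < g x} := by
  by_cases hsub : ∀ x ∈ s, a < f x → b < g x
  · refine (min_le_left _ _).trans (measure_mono_ae ?_)
    filter_upwards [hs] with x hx hax using ⟨hax, hsub x hx hax⟩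
  · push Not at hsub
    obtain ⟨y, hy, hay, hyb⟩ := hsub
    refine (min_le_right _ _).trans (measure_mono_ae ?_)
    filter_upwards [hs] with x hx hbx using ⟨hay.trans_le (hfg hy hx (hyb.trans_lt hbx)), hbx⟩

lemma measure_lt_and_lt_le_of_antivaryOn [IsFiniteMeasure μ] (hg : AEMeasurable g μ)
    (hfg : AntivaryOn f g s) (hs : ∀ᵐ x ∂μ, x ∈ s) (a b : ℝ) :
    μ {x | a < f x ∧ b < g x} ≤ μ {x | a < f x} + μ {x | b < g x} - μ univ := by
  by_cases hdisj : ∀ x ∈ s, ¬ (a < f x ∧ b < g x)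
  · have hnull : μ {x | a < f x ∧ b < g x} = 0 :=
      measure_eq_zero_iff_ae_notMem.2 (hs.mono hdisj)
    exact hnull.trans_le zero_le
  · push Not at hdisj
    obtain ⟨y, hy, hay, hby⟩ := hdisj
    have hcover : μ ({x | a < f x} ∪ {x | b < g x}) = μ univ := by
      refine measure_congr (eventuallyEq_univ.2 ?_)
      filter_upwards [hs] with x hx
      by_contra! hnot
      simp only [mem_union, mem_ofPred_eq, not_or, not_lt] at hnot
      exact (hay.trans_le (hfg hx hy (hnot.2.trans_lt hby))).not_ge hnot.1
    rw [← measure_union_add_inter₀ _ (nullMeasurableSet_lt aemeasurable_const hg), hcover,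
      ENNReal.add_sub_cancel_left (measure_ne_top μ univ)]
    rfl

end FrechetHoeffding

section VaryOn

variable {α β : Type*} [MeasurableSpace α] [MeasurableSpace β] {μ : Measure α} {ν : Measure β}
  {f g : α → ℝ} {F G : β → ℝ} {s : Set β}

lemma lintegral_ofReal_mul_ofReal_le_of_monovaryOn [SFinite μ] [SFinite ν]
    (hf : IdentDistrib f F μ ν) (hg : IdentDistrib g G μ ν) (hFG : MonovaryOn F G s)
    (hs : ∀ᵐ y ∂ν, y ∈ s) :
    ∫⁻ x, ENNReal.ofReal (f x) * ENNReal.ofReal (g x) ∂μ ≤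
      ∫⁻ y, ENNReal.ofReal (F y) * ENNReal.ofReal (G y) ∂ν := by
  rw [lintegral_ofReal_mul_ofReal_eq_lintegral_measure_lt hf.aemeasurable_fst hg.aemeasurable_fst,
    lintegral_ofReal_mul_ofReal_eq_lintegral_measure_lt hf.aemeasurable_snd hg.aemeasurable_snd]
  refine lintegral_mono fun a => lintegral_mono fun b => ?_
  calc
    μ {x | a < f x ∧ b < g x} ≤ min (μ {x | a < f x}) (μ {x | b < g x}) :=
      le_min (measure_mono fun _ h => h.1) (measure_mono fun _ h => h.2)
    _ = min (ν {y | a < F y}) (ν {y | b < G y}) :=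
      congrArg₂ _ (hf.measure_mem_eq measurableSet_Ioi) (hg.measure_mem_eq measurableSet_Ioi)
    _ ≤ ν {y | a < F y ∧ b < G y} := min_measure_lt_le_of_monovaryOn hFG hs a b

lemma lintegral_ofReal_mul_ofReal_le_of_antivaryOn [SFinite μ] [IsFiniteMeasure ν]
    (hf : IdentDistrib f F μ ν) (hg : IdentDistrib g G μ ν) (hFG : AntivaryOn F G s)
    (hs : ∀ᵐ y ∂ν, y ∈ s) :
    ∫⁻ y, ENNReal.ofReal (F y) * ENNReal.ofReal (G y) ∂ν ≤
      ∫⁻ x, ENNReal.ofReal (f x) * ENNReal.ofReal (g x) ∂μ := by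
  rw [lintegral_ofReal_mul_ofReal_eq_lintegral_measure_lt hf.aemeasurable_fst hg.aemeasurable_fst,
    lintegral_ofReal_mul_ofReal_eq_lintegral_measure_lt hf.aemeasurable_snd hg.aemeasurable_snd]
  refine lintegral_mono fun a => lintegral_mono fun b => ?_
  calc
    ν {y | a < F y ∧ b < G y} ≤ ν {y | a < F y} + ν {y | b < G y} - ν univ :=
      measure_lt_and_lt_le_of_antivaryOn hg.aemeasurable_snd hFG hs a b
    _ = μ {x | a < f x} + μ {x | b < g x} - μ univ :=
      congrArg₂ _ (congrArg₂ _ (hf.measure_mem_eq measurableSet_Ioi).symm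
        (hg.measure_mem_eq measurableSet_Ioi).symm) (hf.measure_mem_eq .univ).symm
    _ ≤ μ {x | a < f x ∧ b < g x} := measure_lt_add_measure_lt_sub_le hg.aemeasurable_fst a b

lemma lintegral_ofReal_mul_eq_add (hf : AEMeasurable f μ) (hg : AEMeasurable g μ) :
    ∫⁻ x, ENNReal.ofReal (f x * g x) ∂μ =
      ∫⁻ x, ENNReal.ofReal (f x) * ENNReal.ofReal (g x) ∂μ +
        ∫⁻ x, ENNReal.ofReal (-f x) * ENNReal.ofReal (-g x) ∂μ := by
  simp_rw [ofReal_mul_eq_ofReal_mul_ofReal_add]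
  exact lintegral_add_left' (hf.ennreal_ofReal.mul hg.ennreal_ofReal) _

lemma lintegral_ofReal_mul_le_of_monovaryOn [SFinite μ] [SFinite ν]
    (hf : IdentDistrib f F μ ν) (hg : IdentDistrib g G μ ν) (hFG : MonovaryOn F G s)
    (hs : ∀ᵐ y ∂ν, y ∈ s) :
    ∫⁻ x, ENNReal.ofReal (f x * g x) ∂μ ≤ ∫⁻ y, ENNReal.ofReal (F y * G y) ∂ν := by
  rw [lintegral_ofReal_mul_eq_add hf.aemeasurable_fst hg.aemeasurable_fst,
    lintegral_ofReal_mul_eq_add hf.aemeasurable_snd hg.aemeasurable_snd]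
  exact add_le_add (lintegral_ofReal_mul_ofReal_le_of_monovaryOn hf hg hFG hs)
    (lintegral_ofReal_mul_ofReal_le_of_monovaryOn (hf.comp measurable_neg) (hg.comp measurable_neg)
      hFG.neg hs)

lemma lintegral_ofReal_mul_le_of_antivaryOn [SFinite μ] [IsFiniteMeasure ν]
    (hf : IdentDistrib f F μ ν) (hg : IdentDistrib g G μ ν) (hFG : AntivaryOn F G s)
    (hs : ∀ᵐ y ∂ν, y ∈ s) :
    ∫⁻ y, ENNReal.ofReal (F y * G y) ∂ν ≤ ∫⁻ x, ENNReal.ofReal (f x * g x) ∂μ := by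
  rw [lintegral_ofReal_mul_eq_add hf.aemeasurable_fst hg.aemeasurable_fst,
    lintegral_ofReal_mul_eq_add hf.aemeasurable_snd hg.aemeasurable_snd]
  exact add_le_add (lintegral_ofReal_mul_ofReal_le_of_antivaryOn hf hg hFG hs)
    (lintegral_ofReal_mul_ofReal_le_of_antivaryOn (hf.comp measurable_neg) (hg.comp measurable_neg)
      hFG.neg hs)

lemma integrable_mul_of_monovaryOn_of_identDistrib_abs [SFinite μ] [SFinite ν]
    (hfm : AEMeasurable f μ) (hgm : AEMeasurable g μ)
    (hf : IdentDistrib (fun x => |f x|) F μ ν) (hg : IdentDistrib (fun x => |g x|) G μ ν)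
    (hFG : MonovaryOn F G s) (hs : ∀ᵐ y ∂ν, y ∈ s) (hint : Integrable (fun y => F y * G y) ν) :
    Integrable (fun x => f x * g x) μ := by
  refine ⟨(hfm.mul hgm).aestronglyMeasurable, ?_⟩
  calc
    ∫⁻ x, ‖f x * g x‖ₑ ∂μ = ∫⁻ x, ENNReal.ofReal (|f x| * |g x|) ∂μ := by
      simp only [Real.enorm_eq_ofReal_abs, abs_mul]
    _ ≤ ∫⁻ y, ENNReal.ofReal (F y * G y) ∂ν := lintegral_ofReal_mul_le_of_monovaryOn hf hg hFG hs
    _ ≤ ∫⁻ y, ‖F y * G y‖ₑ ∂ν := lintegral_mono fun _ => Real.ofReal_le_enorm _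
    _ < ∞ := hint.2

theorem integral_mul_le_integral_mul_of_monovaryOn [SFinite μ] [IsFiniteMeasure ν]
    (hf : IdentDistrib f F μ ν) (hg : IdentDistrib g G μ ν) (hFG : MonovaryOn F G s)
    (hs : ∀ᵐ y ∂ν, y ∈ s) (hfg_int : Integrable (fun x => f x * g x) μ)
    (hFG_int : Integrable (fun y => F y * G y) ν) :
    ∫ x, f x * g x ∂μ ≤ ∫ y, F y * G y ∂ν := by
  have hpos := lintegral_ofReal_mul_le_of_monovaryOn hf hg hFG hs
  have hneg : ∫⁻ y, ENNReal.ofReal (-(F y * G y)) ∂ν ≤ ∫⁻ x, ENNReal.ofReal (-(f x * g x)) ∂μ := by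
    simpa only [Function.comp_apply, mul_neg] using
      lintegral_ofReal_mul_le_of_antivaryOn hf (hg.comp measurable_neg) hFG.neg_right hs
  rw [integral_eq_lintegral_pos_part_sub_lintegral_neg_part hfg_int,
    integral_eq_lintegral_pos_part_sub_lintegral_neg_part hFG_int]
  exact sub_le_sub (ENNReal.toReal_mono hFG_int.lintegral_lt_top.ne hpos)
    (ENNReal.toReal_mono hfg_int.neg.lintegral_lt_top.ne hneg)

theorem integral_mul_le_integral_mul_of_antivaryOn [SFinite μ] [IsFiniteMeasure ν]
    (hf : IdentDistrib f F μ ν) (hg : IdentDistrib g G μ ν) (hFG : AntivaryOn F G s)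
    (hs : ∀ᵐ y ∂ν, y ∈ s) (hfg_int : Integrable (fun x => f x * g x) μ)
    (hFG_int : Integrable (fun y => F y * G y) ν) :
    ∫ y, F y * G y ∂ν ≤ ∫ x, f x * g x ∂μ := by
  have hneg := integral_mul_le_integral_mul_of_monovaryOn hf (hg.comp measurable_neg)
    hFG.neg_right hs (by simpa using hfg_int.neg) (by simpa using hFG_int.neg)
  simpa only [Function.comp_apply, mul_neg, integral_neg, neg_le_neg_iff] using hneg

end VaryOn

section Tails

variable {α : Type*} [MeasurableSpace α] {μ : Measure α} {f : α → ℝ}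

lemma antitone_measure_lt : Antitone fun a : ℝ => μ {x | a < f x} :=
  fun _ _ hab => measure_mono fun _ hx => hab.trans_lt hx

lemma measure_lt_le_of_forall_gt {a : ℝ} {c : ℝ≥0∞} (h : ∀ b > a, μ {x | b < f x} ≤ c) :
    μ {x | a < f x} ≤ c := by
  obtain ⟨u, hu_anti, hu_gt, hu_lim⟩ := exists_seq_strictAnti_tendsto a
  have hunion : {x | a < f x} = ⋃ n, {x | u n < f x} := by
    ext x
    simp only [mem_iUnion, mem_ofPred_eq]
    exact ⟨fun hx => (hu_lim.eventually_lt_const hx).exists, fun ⟨n, hn⟩ => (hu_gt n).trans hn⟩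
  have hmono : Monotone fun n => {x | u n < f x} :=
    fun _ _ hmn _ hx => (hu_anti.antitone hmn).trans_lt hx
  rw [hunion, hmono.measure_iUnion]
  exact iSup_le fun n => h _ (hu_gt n)

lemma tendsto_measure_lt_atBot : Tendsto (fun a : ℝ => μ {x | a < f x}) atBot (𝓝 (μ univ)) := by
  have hunion : ⋃ a : ℝ, {x | a < f x} = univ := iUnion_eq_univ_iff.2 fun x => exists_lt (f x)
  rw [← hunion]
  exact tendsto_measure_iUnion_atBot fun _ _ hab _ hx => hab.trans_lt hx

lemma tendsto_measure_lt_atTop [IsFiniteMeasure μ] (hf : AEMeasurable f μ) :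
    Tendsto (fun a : ℝ => μ {x | a < f x}) atTop (𝓝 0) := by
  have hinter : ⋂ a : ℝ, {x | a < f x} = ∅ :=
    eq_empty_of_forall_notMem fun x hx => lt_irrefl (f x) (mem_iInter.1 hx (f x))
  rw [← measure_empty (μ := μ), ← hinter]
  exact tendsto_measure_iInter_atTop (fun _ => nullMeasurableSet_lt aemeasurable_const hf)
    (fun _ _ hab _ hx => hab.trans_lt hx) ⟨0, measure_ne_top _ _⟩

end Tails

section Reflection

lemma sub_mem_Ioo_zero {M t : ℝ} (ht : t ∈ Ioo 0 M) : M - t ∈ Ioo 0 M :=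
  ⟨sub_pos.2 ht.2, sub_lt_self _ ht.1⟩

lemma measurePreserving_sub_left_restrict_Ioo (M : ℝ) :
    MeasurePreserving (M - ·) (volume.restrict (Ioo 0 M)) (volume.restrict (Ioo 0 M)) := by
  have h := (volume.measurePreserving_sub_left M).restrict_preimage
    (measurableSet_Ioo (a := 0) (b := M))
  rwa [preimage_const_sub_Ioo, sub_self, sub_zero] at h

end Reflection

section Rearrangements

variable {α : Type*} [MeasurableSpace α] {μ : Measure α} {f : α → ℝ} {a t : ℝ}

/-- The decreasing rearrangement on `(0, μ univ)` of a real function on a finite measure space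
`(α, μ)`. Like `rr`, of which it is the version for arbitrary measures, it retains the sign of the
function and takes junk values outside `(0, μ univ)`. -/
noncomputable def decreasingRearrangement (f : α → ℝ) (μ : Measure α) (t : ℝ) : ℝ :=
  sInf {a : ℝ | μ {x | a < f x} ≤ ENNReal.ofReal t}

/-- The increasing rearrangement of a real function on a finite measure space `(α, μ)`: the left
limit of the decreasing rearrangement at `μ univ - t`. As in `rrCheck`, this limit is encoded as an
infimum. -/
noncomputable def increasingRearrangement (f : α → ℝ) (μ : Measure α) (t : ℝ) : ℝ :=
  sInf (decreasingRearrangement f μ '' Ioo 0 (μ.real univ - t))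

/-- Lebesgue measure on `(0, μ univ)`, the measure for which the rearrangements of a function have
the same distribution as the function has under `μ`. -/
noncomputable abbrev rearrangementMeasure (μ : Measure α) : Measure ℝ :=
  volume.restrict (Ioo 0 (μ.real univ))

variable [IsFiniteMeasure μ]

lemma decreasingRearrangement_le_iff (hf : AEMeasurable f μ) (ht : t ∈ Ioo 0 (μ.real univ)) :
    decreasingRearrangement f μ t ≤ a ↔ μ {x | a < f x} ≤ ENNReal.ofReal t := by
  have hne : {a : ℝ | μ {x | a < f x} ≤ ENNReal.ofReal t}.Nonempty :=
    ((tendsto_measure_lt_atTop hf).eventually_le_const (ENNReal.ofReal_pos.2 ht.1)).exists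
  have hbdd : BddBelow {a : ℝ | μ {x | a < f x} ≤ ENNReal.ofReal t} := by
    have htμ : ENNReal.ofReal t < μ univ :=
      (ENNReal.ofReal_lt_iff_lt_toReal ht.1.le (measure_ne_top μ univ)).2 ht.2
    obtain ⟨m, hm⟩ := ((tendsto_measure_lt_atBot (f := f)).eventually_const_lt htμ).exists
    exact ⟨m, fun b hb => (antitone_measure_lt.reflect_lt (hb.trans_lt hm)).le⟩
  refine ⟨fun h => measure_lt_le_of_forall_gt fun b hab => ?_, fun h => csInf_le hbdd h⟩
  obtain ⟨c, hc, hcb⟩ := exists_lt_of_csInf_lt hne (h.trans_lt hab)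
  exact (antitone_measure_lt hcb.le).trans hc

lemma lt_decreasingRearrangement_iff (hf : AEMeasurable f μ) (ht : t ∈ Ioo 0 (μ.real univ)) :
    a < decreasingRearrangement f μ t ↔ ENNReal.ofReal t < μ {x | a < f x} := by
  rw [← not_le, decreasingRearrangement_le_iff hf ht, not_le]

lemma antitoneOn_decreasingRearrangement (hf : AEMeasurable f μ) :
    AntitoneOn (decreasingRearrangement f μ) (Ioo 0 (μ.real univ)) :=
  fun _ hx _ hy hxy => (decreasingRearrangement_le_iff hf hy).2 <|
    ((decreasingRearrangement_le_iff hf hx).1 le_rfl).trans (ENNReal.ofReal_le_ofReal hxy)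

lemma rearrangementMeasure_ofReal_lt {c : ℝ≥0∞} (hc : c ≤ μ univ) :
    rearrangementMeasure μ {t | ENNReal.ofReal t < c} = c := by
  have hc_top : c ≠ ∞ := ne_top_of_le_ne_top (measure_ne_top μ univ) hc
  have hset : {t | ENNReal.ofReal t < c} ∩ Ioo 0 (μ.real univ) = Ioo 0 c.toReal := by
    ext t
    refine ⟨fun ⟨htc, ht, _⟩ => ⟨ht, (ENNReal.ofReal_lt_iff_lt_toReal ht.le hc_top).1 htc⟩,
      fun ⟨ht, htc⟩ => ⟨(ENNReal.ofReal_lt_iff_lt_toReal ht.le hc_top).2 htc, ht,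
        htc.trans_le (ENNReal.toReal_mono (measure_ne_top μ univ) hc)⟩⟩
  rw [Measure.restrict_apply' measurableSet_Ioo, hset, Real.volume_Ioo, sub_zero,
    ENNReal.ofReal_toReal hc_top]

lemma rearrangementMeasure_lt_decreasingRearrangement (hf : AEMeasurable f μ) :
    rearrangementMeasure μ {t | a < decreasingRearrangement f μ t} = μ {x | a < f x} := by
  rw [← rearrangementMeasure_ofReal_lt (measure_mono (subset_univ {x | a < f x}))]
  refine measure_congr ?_
  filter_upwards [ae_restrict_mem measurableSet_Ioo] with t ht
  exact propext (lt_decreasingRearrangement_iff hf ht)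

lemma identDistrib_decreasingRearrangement (hf : AEMeasurable f μ) :
    IdentDistrib f (decreasingRearrangement f μ) μ (rearrangementMeasure μ) := by
  have hF : AEMeasurable (decreasingRearrangement f μ) (rearrangementMeasure μ) :=
    aemeasurable_restrict_of_antitoneOn measurableSet_Ioo (antitoneOn_decreasingRearrangement hf)
  refine ⟨hf, hF, ext_of_generate_finite _
    (BorelSpace.measurable_eq.trans (borel_eq_generateFrom_Ioi ℝ)) isPiSystem_Ioi ?_ ?_⟩
  · rintro _ ⟨a, rfl⟩
    rw [Measure.map_apply_of_aemeasurable hf measurableSet_Ioi,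
      Measure.map_apply_of_aemeasurable hF measurableSet_Ioi]
    exact (rearrangementMeasure_lt_decreasingRearrangement hf).symm
  · simp [Measure.map_apply_of_aemeasurable hf, Measure.map_apply_of_aemeasurable hF]

lemma bddBelow_image_decreasingRearrangement (hf : AEMeasurable f μ)
    (ht : t ∈ Ioo 0 (μ.real univ)) :
    BddBelow (decreasingRearrangement f μ '' Ioo 0 t) :=
  ⟨decreasingRearrangement f μ t, forall_mem_image.2 fun _ hx =>
    antitoneOn_decreasingRearrangement hf ⟨hx.1, hx.2.trans ht.2⟩ ht hx.2.le⟩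

lemma monotoneOn_increasingRearrangement (hf : AEMeasurable f μ) :
    MonotoneOn (increasingRearrangement f μ) (Ioo 0 (μ.real univ)) :=
  fun _ hx _ hy hxy => csInf_le_csInf
    (bddBelow_image_decreasingRearrangement hf (sub_mem_Ioo_zero hx))
    ((nonempty_Ioo.2 (sub_pos.2 hy.2)).image _)
    (image_mono (Ioo_subset_Ioo_right (sub_le_sub_left hxy _)))

lemma increasingRearrangement_ae_eq (hf : AEMeasurable f μ) :
    increasingRearrangement f μ =ᵐ[rearrangementMeasure μ]
      fun t => decreasingRearrangement f μ (μ.real univ - t) := by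
  have hanti := antitoneOn_decreasingRearrangement hf
  have hcont : ∀ᵐ t ∂rearrangementMeasure μ,
      ContinuousWithinAt (decreasingRearrangement f μ) (Ioo 0 (μ.real univ)) t := by
    rw [ae_restrict_iff' measurableSet_Ioo]
    filter_upwards [hanti.countable_not_continuousWithinAt.ae_notMem volume] with t ht htI
    by_contra hdisc
    exact ht ⟨htI, hdisc⟩
  filter_upwards [
    (measurePreserving_sub_left_restrict_Ioo (μ.real univ)).quasiMeasurePreserving.ae hcont,
    ae_restrict_mem measurableSet_Ioo] with t hct ht
  have ht' := sub_mem_Ioo_zero ht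
  have hlim := (hanti.mono (Ioo_subset_Ioo_right ht'.2.le)).tendsto_nhdsWithin_Ioo_left
    (nonempty_Ioo.2 ht'.1) (bddBelow_image_decreasingRearrangement hf ht')
  exact tendsto_nhds_unique hlim
    ((hct.continuousAt (isOpen_Ioo.mem_nhds ht')).mono_left nhdsWithin_le_nhds)

lemma identDistrib_increasingRearrangement (hf : AEMeasurable f μ) :
    IdentDistrib f (increasingRearrangement f μ) μ (rearrangementMeasure μ) := by
  have hF := identDistrib_decreasingRearrangement hf
  have hrefl := measurePreserving_sub_left_restrict_Ioo (μ.real univ)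
  have hid : IdentDistrib id (μ.real univ - ·) (rearrangementMeasure μ) (rearrangementMeasure μ) :=
    ⟨aemeasurable_id, hrefl.aemeasurable, Measure.map_id.trans hrefl.map_eq.symm⟩
  have hF_refl : IdentDistrib (decreasingRearrangement f μ)
      (fun t => decreasingRearrangement f μ (μ.real univ - t))
      (rearrangementMeasure μ) (rearrangementMeasure μ) :=
    hid.comp_of_aemeasurable (u := decreasingRearrangement f μ)
      (by simpa only [Measure.map_id] using hF.aemeasurable_snd)
  exact (hF.trans hF_refl).trans
    (.of_ae_eq hF_refl.aemeasurable_snd (increasingRearrangement_ae_eq hf).symm)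

end Rearrangements

lemma rr_eq_decreasingRearrangement (f : ℝ → ℝ) :
    rr f = decreasingRearrangement f (volume.restrict (Ioo 0 1)) := by
  ext t
  simp only [rr, decreasingRearrangement, Measure.restrict_apply' measurableSet_Ioo, inter_comm]
  rfl

lemma rrCheck_eq_increasingRearrangement (f : ℝ → ℝ) :
    rrCheck f = increasingRearrangement f (volume.restrict (Ioo 0 1)) := by
  ext t
  simp [rrCheck, increasingRearrangement, rr_eq_decreasingRearrangement]

theorem hardy_littlewood_inequalities_general {α : Type*} [MeasurableSpace α] {μ : Measure α}
    [IsFiniteMeasure μ] {f g : α → ℝ} (hf : AEMeasurable f μ) (hg : AEMeasurable g μ)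
    (hprod : IntegrableOn (fun t => decreasingRearrangement (fun x => |f x|) μ t *
      decreasingRearrangement (fun x => |g x|) μ t) (Ioo 0 (μ.real univ))) :
    Integrable (fun x => f x * g x) μ ∧
      (∫ t in Ioo 0 (μ.real univ),
        decreasingRearrangement f μ t * increasingRearrangement g μ t) ≤ ∫ x, f x * g x ∂μ ∧
      ∫ x, f x * g x ∂μ ≤ ∫ t in Ioo 0 (μ.real univ),
        decreasingRearrangement f μ t * decreasingRearrangement g μ t := by
  have hs : ∀ᵐ t ∂rearrangementMeasure μ, t ∈ Ioo 0 (μ.real univ) :=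
    ae_restrict_mem measurableSet_Ioo
  have hF := identDistrib_decreasingRearrangement hf
  have hG := identDistrib_decreasingRearrangement hg
  have hG' := identDistrib_increasingRearrangement hg
  have hf_abs := identDistrib_decreasingRearrangement (f := fun x => |f x|) (by fun_prop)
  have hg_abs := identDistrib_decreasingRearrangement (f := fun x => |g x|) (by fun_prop)
  have habs_mono := (antitoneOn_decreasingRearrangement hf_abs.aemeasurable_fst).monovaryOn
    (antitoneOn_decreasingRearrangement hg_abs.aemeasurable_fst)
  have hfg_int := integrable_mul_of_monovaryOn_of_identDistrib_abs hf hg hf_abs hg_abs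
    habs_mono hs hprod
  have hFG_int {G : ℝ → ℝ} (hgG : IdentDistrib g G μ (rearrangementMeasure μ)) :
      Integrable (fun t => decreasingRearrangement f μ t * G t) (rearrangementMeasure μ) :=
    integrable_mul_of_monovaryOn_of_identDistrib_abs hF.aemeasurable_snd hgG.aemeasurable_snd
      ((hF.symm.comp measurable_norm).trans hf_abs) ((hgG.symm.comp measurable_norm).trans hg_abs)
      habs_mono hs hprod
  have hF_anti := antitoneOn_decreasingRearrangement hf
  exact ⟨hfg_int,
    integral_mul_le_integral_mul_of_antivaryOn hF hG'
      (hF_anti.antivaryOn (monotoneOn_increasingRearrangement hg)) hs hfg_int (hFG_int hG'),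
    integral_mul_le_integral_mul_of_monovaryOn hF hG
      (hF_anti.monovaryOn (antitoneOn_decreasingRearrangement hg)) hs hfg_int (hFG_int hG)⟩

theorem hardy_littlewood_inequalities (f g : ℝ → ℝ)
    (hf : IntegrableOn f (Ioo (0:ℝ) 1)) (hg : IntegrableOn g (Ioo (0:ℝ) 1))
    (hprod : IntegrableOn (fun t => rr (fun u => |f u|) t * rr (fun u => |g u|) t)
      (Ioo (0:ℝ) 1)) :
    IntegrableOn (fun u => f u * g u) (Ioo (0:ℝ) 1) ∧
      (∫ s in Ioo (0:ℝ) 1, rr f s * rrCheck g s) ≤ (∫ u in Ioo (0:ℝ) 1, f u * g u) ∧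
      (∫ u in Ioo (0:ℝ) 1, f u * g u) ≤ ∫ s in Ioo (0:ℝ) 1, rr f s * rr g s := by
  simp only [rr_eq_decreasingRearrangement, rrCheck_eq_increasingRearrangement] at hprod ⊢
  simpa [IntegrableOn] using
    hardy_littlewood_inequalities_general hf.aemeasurable hg.aemeasurable (by simpa using hprod)
end

section
/- Let y ∈ L¹(0,1) and suppose x ∈ Ω(y) satisfies: for every t ∈ (0,1), either λ(t; x) = λ(t; y), or λ(t; x) ≠ λ(t; y), the level set {u : x(u) = λ(t; x)} is an atom of Lebesgue measure restricted appropriately — which is impossible in the atomless case. Conclude: if (0,1) carries Lebesgue measure (atomless), then x ∈ Ω(y) is an extreme point of Ω(y) if and only if λ(x) = λ(y). -/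
open MeasureTheory Set

open Filter ProbabilityTheory
open scoped Topology

/-! The excess function `c ↦ ∫ (f - c)⁺` is Legendre dual to `s ↦ ∫₀ˢ λ(f)`, so `x ≺ y` says that
the excess of `x` is at most that of `y` and that the integrals agree. Its right derivative is minus
the distribution function of `f`, so it determines `λ(f)`.

If the excess functions of `x` and `y` agree and `x` is the midpoint of `x₁, x₂ ∈ Ω(y)`, then for
every `c` the convexity inequality for `v ↦ (v - c)⁺` between `x₁ u` and `x₂ u` is an equality for
almost every `u`, and letting `c` run through `ℚ` forces `x₁ = x₂` almost everywhere.

Otherwise let `a` be the rightmost point where the gap between the two excess functions is maximal.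
The excess of `y` is convex, so that of `x` cannot be affine near `a`; hence `x` takes values near
`a` on a set of positive measure. Lebesgue measure being atomless, this set splits into two halves
of equal measure. Raising `x` by a small constant on one and lowering it on the other changes the
excess only near `a`, where there is room below the excess of `y`. -/

section Tail

variable {α : Type*} [MeasurableSpace α] {μ : Measure α} {f : α → ℝ}

/-- The distribution function `s ↦ μ {f > s}`, with real values. -/
noncomputable def tail (μ : Measure α) (f : α → ℝ) (s : ℝ) : ℝ := μ.real {u | s < f u}

lemma antitone_tail [IsFiniteMeasure μ] (f : α → ℝ) : Antitone (tail μ f) := fun _ _ h =>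
  measureReal_mono fun _ hu => h.trans_lt hu

variable [IsProbabilityMeasure μ]

lemma tail_mem_Icc (f : α → ℝ) (s : ℝ) : tail μ f s ∈ Icc (0 : ℝ) 1 :=
  ⟨measureReal_nonneg, measureReal_le_one⟩

lemma tail_eq_one_sub_cdf (hf : AEMeasurable f μ) : tail μ f = fun s => 1 - cdf (μ.map f) s := by
  funext s
  have := Measure.isProbabilityMeasure_map hf
  rw [cdf_eq_real, ← probReal_compl_eq_one_sub measurableSet_Iic, compl_Iic, measureReal_def,
    Measure.map_apply_of_aemeasurable hf measurableSet_Ioi]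
  rfl

lemma tendsto_tail_atTop (hf : AEMeasurable f μ) : Tendsto (tail μ f) atTop (𝓝 0) := by
  rw [tail_eq_one_sub_cdf hf, ← sub_self (1 : ℝ)]
  exact (tendsto_cdf_atTop _).const_sub 1

lemma tendsto_tail_atBot (hf : AEMeasurable f μ) : Tendsto (tail μ f) atBot (𝓝 1) := by
  rw [tail_eq_one_sub_cdf hf]
  simpa using (tendsto_cdf_atBot (μ.map f)).const_sub 1

lemma continuousWithinAt_tail (hf : AEMeasurable f μ) (s : ℝ) :
    ContinuousWithinAt (tail μ f) (Ici s) s := by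
  rw [tail_eq_one_sub_cdf hf]
  exact continuousWithinAt_const.sub ((cdf (μ.map f)).right_continuous s)

lemma lt_sInf_tail_le_iff (hf : AEMeasurable f μ) {t : ℝ} (ht : t ∈ Ioo (0 : ℝ) 1) {s : ℝ} :
    s < sInf {r | tail μ f r ≤ t} ↔ t < tail μ f s := by
  have hlt {q r : ℝ} (hq : t < tail μ f q) (hr : tail μ f r ≤ t) : q < r :=
    (antitone_tail f).reflect_lt (hr.trans_lt hq)
  have hne : {r | tail μ f r ≤ t}.Nonempty :=
    ((tendsto_tail_atTop hf).eventually_le_const ht.1).exists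
  have hbdd : BddBelow {r | tail μ f r ≤ t} := by
    obtain ⟨q, hq⟩ := ((tendsto_tail_atBot hf).eventually_const_lt ht.2).exists
    exact ⟨q, fun r hr => (hlt hq hr).le⟩
  refine ⟨fun h => not_le.1 fun hle => (csInf_le hbdd hle).not_gt h, fun h => ?_⟩
  have hright := (continuousWithinAt_tail hf s).mono Ioi_subset_Ici_self
  obtain ⟨q, hq, hsq⟩ := ((hright.eventually_const_lt h).and self_mem_nhdsWithin).exists
  exact hsq.trans_le (le_csInf hne fun r hr => (hlt hq hr).le)

lemma identDistrib_of_tail_eq {β : Type*} [MeasurableSpace β] {ν : Measure β}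
    [IsProbabilityMeasure ν] {g : β → ℝ} (hf : AEMeasurable f μ) (hg : AEMeasurable g ν)
    (h : tail μ f = tail ν g) : IdentDistrib f g μ ν := by
  have := Measure.isProbabilityMeasure_map hf
  have := Measure.isProbabilityMeasure_map hg
  refine ⟨hf, hg, Measure.eq_of_cdf _ _ (StieltjesFunction.ext fun s => ?_)⟩
  rw [tail_eq_one_sub_cdf hf, tail_eq_one_sub_cdf hg] at h
  exact sub_right_injective (congrFun h s)

end Tail

section Excess

variable {α : Type*} [MeasurableSpace α] {μ : Measure α} {f g : α → ℝ}

/-- The excess function `c ↦ ∫ (f - c)⁺` (the stop-loss transform), through which majorisation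
becomes a pointwise inequality. -/
noncomputable def excess (μ : Measure α) (f : α → ℝ) (c : ℝ) : ℝ := ∫ u, max (f u - c) 0 ∂μ

lemma integrable_max_sub [IsFiniteMeasure μ] (hf : Integrable f μ) (c : ℝ) :
    Integrable (fun u => max (f u - c) 0) μ :=
  (hf.sub (integrable_const c)).pos_part

lemma excess_congr_ae (h : f =ᵐ[μ] g) (c : ℝ) : excess μ f c = excess μ g c :=
  integral_congr_ae (h.mono fun u hu => by simp only [hu])

lemma setIntegral_le_excess_add [IsFiniteMeasure μ] (hf : Integrable f μ) (c : ℝ) (s : Set α) :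
    ∫ u in s, f u ∂μ ≤ excess μ f c + c * μ.real s := by
  have hpos := integrable_max_sub hf c
  calc ∫ u in s, f u ∂μ
      ≤ ∫ u in s, (max (f u - c) 0 + c) ∂μ :=
        integral_mono hf.integrableOn (hpos.integrableOn.add (integrable_const c))
          fun u => sub_le_iff_le_add.1 (le_max_left _ _)
    _ = ∫ u in s, max (f u - c) 0 ∂μ + c * μ.real s := by
        rw [integral_add hpos.integrableOn (integrable_const c), setIntegral_const, smul_eq_mul,
          mul_comm]
    _ ≤ excess μ f c + c * μ.real s := by
        gcongr
        exact setIntegral_le_integral hpos (.of_forall fun u => le_max_right _ _)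

lemma setIntegral_eq_excess_add [IsFiniteMeasure μ] (hf : Integrable f μ) {c : ℝ} {s : Set α}
    (hs : MeasurableSet s) (hge : ∀ᵐ u ∂μ, u ∈ s → c ≤ f u) (hle : ∀ᵐ u ∂μ, u ∉ s → f u ≤ c) :
    ∫ u in s, f u ∂μ = excess μ f c + c * μ.real s := by
  have hpos : (fun u => max (f u - c) 0) =ᵐ[μ] s.indicator fun u => f u - c := by
    filter_upwards [hge, hle] with u hge hle
    by_cases hu : u ∈ s
    · simpa [hu] using hge hu
    · simpa [hu] using hle hu
  rw [excess, integral_congr_ae hpos, integral_indicator hs,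
    integral_sub hf.integrableOn (integrable_const c), setIntegral_const, smul_eq_mul]
  ring

lemma hasDerivWithinAt_max_sub (v c : ℝ) :
    HasDerivWithinAt (fun t => max (v - t) 0) ((Ioi c).indicator (fun _ => -1) v) (Ioi c) c := by
  by_cases hv : c < v
  · rw [indicator_of_mem (mem_Ioi.2 hv)]
    refine ((hasDerivAt_id c).const_sub v).hasDerivWithinAt.congr_of_eventuallyEq ?_
      (max_eq_left (sub_nonneg.2 hv.le))
    filter_upwards [mem_nhdsWithin_of_mem_nhds (Iio_mem_nhds hv)] with t ht
    exact max_eq_left (sub_nonneg.2 (le_of_lt ht))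
  · rw [indicator_of_notMem (by simpa using hv)]
    refine (hasDerivWithinAt_const c (Ioi c) (0 : ℝ)).congr (fun t ht => ?_) ?_
    · exact max_eq_right (sub_nonpos.2 ((not_lt.1 hv).trans (le_of_lt ht)))
    · exact max_eq_right (sub_nonpos.2 (not_lt.1 hv))

lemma abs_slope_max_sub_le_one (v c t : ℝ) : |slope (fun t => max (v - t) 0) c t| ≤ 1 := by
  rw [slope_def_field, abs_div]
  refine div_le_one_of_le₀ ((abs_max_sub_max_le_abs _ _ _).trans_eq ?_) (abs_nonneg _)
  rw [sub_sub_sub_cancel_left, abs_sub_comm]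

lemma slope_excess [IsFiniteMeasure μ] (hf : Integrable f μ) (c t : ℝ) :
    slope (excess μ f) c t = ∫ u, slope (fun t => max (f u - t) 0) c t ∂μ := by
  simp only [slope_def_field, excess, integral_div]
  rw [integral_sub (integrable_max_sub hf t) (integrable_max_sub hf c)]

lemma hasDerivWithinAt_excess [IsFiniteMeasure μ] (hf : Integrable f μ) (c : ℝ) :
    HasDerivWithinAt (excess μ f) (-tail μ f c) (Ioi c) c := by
  have htail : -tail μ f c = ∫ u, (Ioi c).indicator (fun _ => -1) (f u) ∂μ := by
    have hnull : NullMeasurableSet {u | c < f u} μ :=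
      nullMeasurableSet_lt aemeasurable_const hf.aemeasurable
    have h := integral_indicator₀ (f := fun _ => (-1 : ℝ)) hnull
    rw [setIntegral_const, smul_eq_mul, mul_neg_one] at h
    exact h.symm
  rw [hasDerivWithinAt_iff_tendsto_slope' self_notMem_Ioi, htail]
  refine (tendsto_integral_filter_of_dominated_convergence (fun _ => 1) ?_ ?_
    (integrable_const 1) ?_).congr fun t => (slope_excess hf c t).symm
  · refine .of_forall fun t => ?_
    simp only [slope_def_field]
    exact (((integrable_max_sub hf t).sub (integrable_max_sub hf c)).div_const _).1
  · exact .of_forall fun t => .of_forall fun u => abs_slope_max_sub_le_one (f u) c t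
  · exact .of_forall fun u => (hasDerivWithinAt_iff_tendsto_slope' self_notMem_Ioi).1
      (hasDerivWithinAt_max_sub (f u) c)

lemma tail_eq_of_excess_eq {β : Type*} [MeasurableSpace β] {ν : Measure β} [IsFiniteMeasure μ]
    [IsFiniteMeasure ν] {g : β → ℝ} (hf : Integrable f μ) (hg : Integrable g ν)
    (h : excess μ f = excess ν g) : tail μ f = tail ν g := by
  funext c
  have hderiv := hasDerivWithinAt_excess hf c
  rw [h] at hderiv
  exact neg_injective ((uniqueDiffWithinAt_Ioi c).eq_deriv _ hderiv (hasDerivWithinAt_excess hg c))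

lemma excess_add_le_add [IsFiniteMeasure μ] (hf : Integrable f μ) (hg : Integrable g μ) {δ : ℝ}
    (hδ : ∀ᵐ u ∂μ, |g u| ≤ δ) (c : ℝ) :
    excess μ (f + g) c ≤ excess μ f c + δ * μ.real univ := by
  have hpos := integrable_max_sub hf c
  calc excess μ (f + g) c
      ≤ ∫ u, (max (f u - c) 0 + δ) ∂μ := by
        refine integral_mono_ae (integrable_max_sub (hf.add hg) c)
          (hpos.add (integrable_const δ)) ?_
        filter_upwards [hδ] with u hu
        have hgu := abs_le.1 hu
        refine max_le ?_ (add_nonneg (le_max_right _ _) ((abs_nonneg _).trans hu))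
        linarith [le_max_left (f u - c) 0, Pi.add_apply f g u]
    _ = excess μ f c + δ * μ.real univ := by
        rw [integral_add hpos (integrable_const δ), integral_const, smul_eq_mul, mul_comm, excess]

lemma lipschitzWith_excess [IsFiniteMeasure μ] (hf : Integrable f μ) :
    LipschitzWith (μ.real univ).toNNReal (excess μ f) := by
  refine LipschitzWith.of_le_add_mul _ fun a b => ?_
  have hshift : excess μ f a = excess μ (f + fun _ => b - a) b := by
    simp only [excess, Pi.add_apply, add_sub_assoc, sub_sub_cancel_left, ← sub_eq_add_neg]
  rw [hshift, Real.coe_toNNReal _ measureReal_nonneg, mul_comm, dist_comm, Real.dist_eq]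
  exact excess_add_le_add hf (integrable_const _) (.of_forall fun _ => le_rfl) b

lemma tendsto_excess_atTop (hf : Integrable f μ) : Tendsto (excess μ f) atTop (𝓝 0) := by
  rw [← integral_zero α ℝ (μ := μ)]
  refine tendsto_integral_filter_of_dominated_convergence (fun u => |f u|) ?_ ?_ hf.abs ?_
  · exact .of_forall fun c => ((hf.1.sub aestronglyMeasurable_const).sup aestronglyMeasurable_const)
  · filter_upwards [eventually_ge_atTop 0] with c hc
    refine .of_forall fun u => ?_
    rw [Real.norm_of_nonneg (le_max_right _ _)]
    exact max_le (by linarith [le_abs_self (f u)]) (abs_nonneg _)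
  · refine .of_forall fun u => tendsto_const_nhds.congr' ?_
    filter_upwards [eventually_ge_atTop (f u)] with c hc
    exact (max_eq_right (sub_nonpos.2 hc)).symm

lemma tendsto_excess_add_mul_atBot [IsFiniteMeasure μ] (hf : Integrable f μ) :
    Tendsto (fun c => excess μ f c + c * μ.real univ) atBot (𝓝 (∫ u, f u ∂μ)) := by
  have hmax (c : ℝ) : ∫ u, max (f u) c ∂μ = excess μ f c + c * μ.real univ := by
    have h (u : α) : max (f u) c = max (f u - c) 0 + c := by
      rw [← max_add_add_right, sub_add_cancel, zero_add]
    simp only [h]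
    rw [integral_add (integrable_max_sub hf c) (integrable_const c), integral_const, smul_eq_mul,
      mul_comm, excess]
  refine (tendsto_integral_filter_of_dominated_convergence (fun u => |f u|) ?_ ?_ hf.abs ?_).congr
    hmax
  · exact .of_forall fun c => hf.1.sup aestronglyMeasurable_const
  · filter_upwards [eventually_le_atBot 0] with c hc
    refine .of_forall fun u => abs_le.2 ⟨?_, max_le (le_abs_self _) (hc.trans (abs_nonneg _))⟩
    exact (neg_abs_le _).trans (le_max_left _ _)
  · refine .of_forall fun u => tendsto_const_nhds.congr' ?_
    filter_upwards [eventually_le_atBot (f u)] with c hc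
    exact (max_eq_left hc).symm

lemma tendsto_excess_sub_excess_cocompact [IsFiniteMeasure μ] (hf : Integrable f μ)
    (hg : Integrable g μ) (hint : ∫ u, f u ∂μ = ∫ u, g u ∂μ) :
    Tendsto (fun c => excess μ g c - excess μ f c) (cocompact ℝ) (𝓝 0) := by
  rw [cocompact_eq_atBot_atTop]
  refine Tendsto.sup ?_ ?_
  · simpa [hint] using (tendsto_excess_add_mul_atBot hg).sub (tendsto_excess_add_mul_atBot hf)
  · simpa using (tendsto_excess_atTop hg).sub (tendsto_excess_atTop hf)

end Excess

section Midpoint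

variable {α : Type*} [MeasurableSpace α] {μ : Measure α} [IsFiniteMeasure μ] {f g : α → ℝ}

lemma max_midpoint_sub_le (a b c : ℝ) :
    max ((a + b) / 2 - c) 0 ≤ (max (a - c) 0 + max (b - c) 0) / 2 := by
  refine max_le ?_ (by positivity)
  linarith [le_max_left (a - c) 0, le_max_left (b - c) 0]

lemma max_midpoint_sub_lt {a b c : ℝ} (hac : a < c) (hcb : c < b) :
    max ((a + b) / 2 - c) 0 < (max (a - c) 0 + max (b - c) 0) / 2 := by
  rw [max_eq_right (sub_nonpos.2 hac.le), max_eq_left (sub_nonneg.2 hcb.le)]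
  exact max_lt (by linarith) (by linarith)

lemma eq_of_forall_rat_max_midpoint_sub {a b : ℝ}
    (h : ∀ q : ℚ, max ((a + b) / 2 - q) 0 = (max (a - q) 0 + max (b - q) 0) / 2) : a = b := by
  by_contra hne
  rcases lt_or_gt_of_ne hne with hlt | hlt <;> obtain ⟨q, hq, hq'⟩ := exists_rat_btwn hlt
  · exact (max_midpoint_sub_lt hq hq').ne (h q)
  · refine (max_midpoint_sub_lt hq hq').ne ?_
    rw [add_comm b, h q, add_comm]

lemma ae_eq_of_excess_add_excess_le (hf : Integrable f μ) (hg : Integrable g μ)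
    (h : ∀ c, excess μ f c + excess μ g c ≤ 2 * excess μ (fun u => (f u + g u) / 2) c) :
    f =ᵐ[μ] g := by
  have hmid (c : ℝ) : ∀ᵐ u ∂μ,
      max ((f u + g u) / 2 - c) 0 = (max (f u - c) 0 + max (g u - c) 0) / 2 := by
    have hif := integrable_max_sub hf c
    have hig := integrable_max_sub hg c
    have him := integrable_max_sub ((hf.add hg).div_const 2) c
    have hle : ∀ᵐ u ∂μ,
        max ((f u + g u) / 2 - c) 0 ≤ (max (f u - c) 0 + max (g u - c) 0) / 2 :=
      .of_forall fun u => max_midpoint_sub_le _ _ _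
    refine (integral_eq_iff_of_ae_le him ((hif.add hig).div_const 2) hle).1 ?_
    refine (integral_mono_ae him ((hif.add hig).div_const 2) hle).antisymm ?_
    simp only [Pi.add_apply]
    rw [integral_div, integral_add hif hig]
    have := h c
    unfold excess at this
    linarith
  filter_upwards [ae_all_iff.2 fun q : ℚ => hmid q] with u hu
  exact eq_of_forall_rat_max_midpoint_sub hu

end Midpoint

section Perturbation

lemma exists_rightmost_max {X Y : Type*} [LinearOrder X] [TopologicalSpace X]
    [ClosedIciTopology X] [LinearOrder Y] [TopologicalSpace Y] [OrderClosedTopology Y]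
    {φ : X → Y} (hφ : Continuous φ) {x₀ : X} (h : ∀ᶠ x in cocompact X, φ x < φ x₀) :
    ∃ a, (∀ x, φ x ≤ φ a) ∧ ∀ x, a < x → φ x < φ a := by
  obtain ⟨m, hm⟩ := hφ.exists_forall_ge' x₀ (h.mono fun _ => le_of_lt)
  obtain ⟨K, hK, hKφ⟩ := mem_cocompact.1 h
  have hsub : {x | φ x = φ m} ⊆ K := fun x hx => by
    by_contra hxK
    exact absurd (hKφ hxK) (not_lt.2 ((hm x₀).trans_eq (Eq.symm hx)))
  have hcompact : IsCompact {x | φ x = φ m} :=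
    hK.of_isClosed_subset (isClosed_eq hφ continuous_const) hsub
  obtain ⟨a, ha, hmax⟩ := hcompact.exists_isGreatest ⟨m, rfl⟩
  have ha : φ a = φ m := ha
  rw [← ha] at hm hmax
  exact ⟨a, hm, fun x hx => (hm x).lt_of_ne fun heq => (hmax heq).not_gt hx⟩

variable {α : Type*} [MeasurableSpace α] {μ : Measure α} {f g : α → ℝ}

lemma excess_add_eq_of_le {c : ℝ} (h : ∀ᵐ u ∂μ, g u ≠ 0 → f u ≤ c ∧ f u + g u ≤ c) :
    excess μ (f + g) c = excess μ f c := by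
  refine integral_congr_ae ?_
  filter_upwards [h] with u hu
  rcases eq_or_ne (g u) 0 with hgu | hgu
  · simp [hgu]
  · obtain ⟨hfc, hfgc⟩ := hu hgu
    rw [Pi.add_apply, max_eq_right (sub_nonpos.2 hfc), max_eq_right (sub_nonpos.2 hfgc)]

variable [IsFiniteMeasure μ]

lemma excess_add_eq_of_ge (hf : Integrable f μ) (hg : Integrable g μ) {c : ℝ}
    (h : ∀ᵐ u ∂μ, g u ≠ 0 → c ≤ f u ∧ c ≤ f u + g u) :
    excess μ (f + g) c = excess μ f c + ∫ u, g u ∂μ := by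
  rw [excess, excess, ← integral_add (integrable_max_sub hf c) hg]
  refine integral_congr_ae ?_
  filter_upwards [h] with u hu
  rcases eq_or_ne (g u) 0 with hgu | hgu
  · simp [hgu]
  · obtain ⟨hcf, hcfg⟩ := hu hgu
    rw [Pi.add_apply, max_eq_left (sub_nonneg.2 hcf), max_eq_left (sub_nonneg.2 hcfg)]
    ring

lemma excess_add_le_of_window (hf : Integrable f μ) (hg : Integrable g μ) (hg₀ : ∫ u, g u ∂μ = 0)
    {a ε δ : ℝ} (hδε : δ ≤ ε) (hδ : ∀ᵐ u ∂μ, |g u| ≤ δ)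
    (hsupp : ∀ᵐ u ∂μ, g u ≠ 0 → |f u - a| < ε) {φ : ℝ → ℝ} (hφ : ∀ c, excess μ f c ≤ φ c)
    (hgap : ∀ c, |c - a| ≤ 2 * ε → excess μ f c + δ * μ.real univ ≤ φ c) (c : ℝ) :
    excess μ (f + g) c ≤ φ c := by
  rcases le_or_gt |c - a| (2 * ε) with hc | hc
  · exact (excess_add_le_add hf hg hδ c).trans (hgap c hc)
  refine le_trans (le_of_eq ?_) (hφ c)
  rcases lt_abs.1 hc with hc | hc
  · refine excess_add_eq_of_le ?_
    filter_upwards [hδ, hsupp] with u hδu hu hne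
    have hfu := abs_lt.1 (hu hne)
    have hgu := abs_le.1 hδu
    constructor <;> linarith
  · rw [excess_add_eq_of_ge hf hg, hg₀, add_zero]
    filter_upwards [hδ, hsupp] with u hδu hu hne
    have hfu := abs_lt.1 (hu hne)
    have hgu := abs_le.1 hδu
    constructor <;> linarith

lemma two_mul_excess_le (hf : Integrable f μ) (a ε : ℝ) :
    2 * excess μ f a ≤ excess μ f (a + ε) + excess μ f (a - ε) := by
  unfold excess
  rw [← integral_add (integrable_max_sub hf _) (integrable_max_sub hf _), ← integral_const_mul]
  refine integral_mono ((integrable_max_sub hf _).const_mul 2)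
    ((integrable_max_sub hf _).add (integrable_max_sub hf _)) fun u => ?_
  have h := max_midpoint_sub_le (f u - ε) (f u + ε) a
  rw [sub_add_add_cancel, add_self_div_two, sub_right_comm, add_sub_right_comm] at h
  dsimp only
  rw [sub_add_eq_sub_sub, sub_sub_eq_add_sub, add_sub_right_comm]
  linarith

lemma two_mul_excess_eq_of_ae_le_abs_sub (hf : Integrable f μ) {a ε : ℝ}
    (hε : 0 ≤ ε) (h : ∀ᵐ u ∂μ, ε ≤ |f u - a|) :
    2 * excess μ f a = excess μ f (a + ε) + excess μ f (a - ε) := by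
  unfold excess
  rw [← integral_add (integrable_max_sub hf _) (integrable_max_sub hf _), ← integral_const_mul]
  refine integral_congr_ae ?_
  filter_upwards [h] with u hu
  rcases le_abs.1 hu with hge | hle
  · rw [max_eq_left (by linarith), max_eq_left (by linarith), max_eq_left (by linarith)]
    ring
  · rw [max_eq_right (by linarith), max_eq_right (by linarith), max_eq_right (by linarith)]
    ring

lemma exists_window_of_excess_lt (hf : Integrable f μ) (hg : Integrable g μ)
    (hint : ∫ u, f u ∂μ = ∫ u, g u ∂μ) {c₀ : ℝ} (h₀ : excess μ f c₀ < excess μ g c₀) :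
    ∃ a ε η : ℝ, 0 < ε ∧ 0 < η ∧ (¬ ∀ᵐ u ∂μ, ε ≤ |f u - a|) ∧
      ∀ c, |c - a| ≤ 2 * ε → excess μ f c + η ≤ excess μ g c := by
  set gap : ℝ → ℝ := fun c => excess μ g c - excess μ f c with hgap
  have hcont : Continuous gap := (lipschitzWith_excess hg).continuous.sub
    (lipschitzWith_excess hf).continuous
  have hgap₀ : 0 < gap c₀ := sub_pos.2 h₀
  obtain ⟨a, hmax, hright⟩ := exists_rightmost_max hcont
    ((tendsto_excess_sub_excess_cocompact hf hg hint).eventually_lt_const hgap₀)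
  have hpos : 0 < gap a := hgap₀.trans_le (hmax c₀)
  obtain ⟨r, hr, hball⟩ := Metric.eventually_nhds_iff.1
    (hcont.continuousAt.eventually_const_lt (half_lt_self hpos))
  have hε : 0 < r / 3 := by positivity
  refine ⟨a, r / 3, gap a / 2, hε, half_pos hpos, fun hae => ?_, fun c hc => ?_⟩
  · have haffine := two_mul_excess_eq_of_ae_le_abs_sub hf hε.le hae
    have hconvex := two_mul_excess_le hg a (r / 3)
    have hleft := hmax (a - r / 3)
    have hright := hright (a + r / 3) (by linarith)
    simp only [hgap] at hleft hright
    linarith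
  · have h : gap a / 2 < gap c := hball (by rw [Real.dist_eq]; linarith)
    simp only [hgap] at h ⊢
    linarith

end Perturbation

section Atomless

variable {μ : Measure ℝ} [NullSingletonClass μ]

lemma exists_measurableSet_setIntegral_eq_half {w : ℝ → ℝ} (hw : Integrable w μ) :
    ∃ S, MeasurableSet S ∧ ∫ u in S, w u ∂μ = (∫ u, w u ∂μ) / 2 := by
  have hcont : Continuous fun s => ∫ u in (0 : ℝ)..s, w u ∂μ :=
    intervalIntegral.continuous_primitive (fun _ _ => hw.intervalIntegrable) 0
  have htop : Tendsto (fun s => ∫ u in (0 : ℝ)..s, w u ∂μ) atTop (𝓝 (∫ u in Ioi 0, w u ∂μ)) :=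
    intervalIntegral_tendsto_integral_Ioi 0 hw.integrableOn tendsto_id
  have hbot : Tendsto (fun s => ∫ u in (0 : ℝ)..s, w u ∂μ) atBot (𝓝 (-∫ u in Iic 0, w u ∂μ)) :=
    (intervalIntegral_tendsto_integral_Iic 0 hw.integrableOn tendsto_id).neg.congr fun s =>
      (intervalIntegral.integral_symm s 0).symm
  have hsplit : ∫ u in Iic 0, w u ∂μ + ∫ u in Ioi 0, w u ∂μ = ∫ u, w u ∂μ :=
    intervalIntegral.integral_Iic_add_Ioi hw.integrableOn hw.integrableOn
  rcases eq_or_ne (∫ u, w u ∂μ) 0 with hzero | hne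
  · exact ⟨univ, .univ, by rw [setIntegral_univ, hzero, zero_div]⟩
  set right := ∫ u in Ioi 0, w u ∂μ
  set left := ∫ u in Iic 0, w u ∂μ with hleft
  obtain ⟨s, -, hs⟩ : (right - left) / 2 ∈ (fun s => ∫ u in (0 : ℝ)..s, w u ∂μ) '' univ := by
    rcases lt_or_gt_of_ne hne with hneg | hpos
    · have hmem : (right - left) / 2 ∈ Ioo right (-left) := ⟨by linarith, by linarith⟩
      exact isPreconnected_univ.intermediate_value_Ioo (by simp) (by simp)
        hcont.continuousOn htop hbot hmem
    · have hmem : (right - left) / 2 ∈ Ioo (-left) right := ⟨by linarith, by linarith⟩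
      exact isPreconnected_univ.intermediate_value_Ioo (by simp) (by simp)
        hcont.continuousOn hbot htop hmem
  refine ⟨Iic s, measurableSet_Iic, ?_⟩
  have hIic := intervalIntegral.integral_Iic_sub_Iic (a := 0) (b := s)
    hw.integrableOn hw.integrableOn
  linarith only [hIic, hs, hsplit, hleft]

lemma exists_abs_eq_integral_eq_zero {w : ℝ → ℝ} (hw : Integrable w μ) :
    ∃ d : ℝ → ℝ, Integrable d μ ∧ (∀ u, |d u| = |w u|) ∧ ∫ u, d u ∂μ = 0 := by
  classical
  obtain ⟨S, hS, hhalf⟩ := exists_measurableSet_setIntegral_eq_half hw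
  refine ⟨S.piecewise w (-w), .piecewise hS hw.integrableOn hw.neg.integrableOn, fun u => ?_, ?_⟩
  · by_cases hu : u ∈ S <;> simp [hu]
  · have hsplit := integral_add_compl hS hw
    rw [integral_piecewise hS hw.integrableOn hw.neg.integrableOn]
    simp only [Pi.neg_apply, integral_neg]
    linarith

lemma exists_perturbation_of_excess_lt [IsFiniteMeasure μ] {x y : ℝ → ℝ} (hx : Integrable x μ)
    (hy : Integrable y μ) (hint : ∫ u, x u ∂μ = ∫ u, y u ∂μ)
    (hle : ∀ c, excess μ x c ≤ excess μ y c) {c₀ : ℝ} (h₀ : excess μ x c₀ < excess μ y c₀) :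
    ∃ d : ℝ → ℝ, Integrable d μ ∧ ∫ u, d u ∂μ = 0 ∧ ¬ d =ᵐ[μ] 0 ∧
      (∀ c, excess μ (x + d) c ≤ excess μ y c) ∧ ∀ c, excess μ (x + -d) c ≤ excess μ y c := by
  obtain ⟨a, ε, η, hε, hη, hmass, hgap⟩ := exists_window_of_excess_lt hx hy hint h₀
  have : NeZero μ := ⟨fun hμ => hmass (by simp [hμ])⟩
  have hμ : 0 < μ.real univ := measureReal_univ_pos
  obtain ⟨δ, hδ, hδε, hδη⟩ : ∃ δ, 0 < δ ∧ δ ≤ ε ∧ δ * μ.real univ ≤ η :=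
    ⟨min ε (η / μ.real univ), lt_min hε (div_pos hη hμ), min_le_left _ _,
      (le_div_iff₀ hμ).1 (min_le_right _ _)⟩
  set B : Set ℝ := {u | |x u - a| < ε}
  have hB : NullMeasurableSet B μ :=
    nullMeasurableSet_lt (hx.sub (integrable_const a)).abs.aemeasurable aemeasurable_const
  obtain ⟨d, hd, habs, hd₀⟩ := exists_abs_eq_integral_eq_zero ((integrable_const δ).indicator₀ hB)
  have hdδ (u : ℝ) : |d u| ≤ δ := by
    rw [habs, ← Real.norm_eq_abs]
    exact (norm_indicator_le_norm_self _ u).trans_eq (Real.norm_of_nonneg hδ.le)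
  have hsupp (u : ℝ) (hu : d u ≠ 0) : |x u - a| < ε :=
    mem_of_indicator_ne_zero (s := B) (abs_ne_zero.1 (habs u ▸ abs_ne_zero.2 hu))
  have hgap' (c : ℝ) (hc : |c - a| ≤ 2 * ε) : excess μ x c + δ * μ.real univ ≤ excess μ y c :=
    (add_le_add_right hδη _).trans (hgap c hc)
  refine ⟨d, hd, hd₀, fun hzero => hmass ?_,
    excess_add_le_of_window hx hd hd₀ hδε (.of_forall hdδ) (.of_forall hsupp) hle hgap',
    excess_add_le_of_window hx hd.neg ?_ hδε ?_ ?_ hle hgap'⟩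
  · filter_upwards [hzero] with u hu
    by_contra! hlt
    have h := habs u
    rw [hu, indicator_of_mem (s := B) hlt, Pi.zero_apply, abs_zero, abs_of_pos hδ] at h
    exact hδ.ne h
  · simp [integral_neg, hd₀]
  · exact .of_forall fun u => (abs_neg (d u)).trans_le (hdδ u)
  · exact .of_forall fun u hu => hsupp u (neg_ne_zero.1 hu)

end Atomless

section Rearrangement

/-- Lebesgue measure on `(0,1)`, as a measure on `ℝ`. -/
noncomputable abbrev unitVol : Measure ℝ := volume.restrict (Ioo (0 : ℝ) 1)

instance isProbabilityMeasure_unitVol : IsProbabilityMeasure unitVol := ⟨by simp⟩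

variable {f g : ℝ → ℝ}

lemma setIntegral_unitVol_Ioo (f : ℝ → ℝ) {s : ℝ} (hs : s ≤ 1) :
    ∫ t in Ioo 0 s, f t ∂unitVol = ∫ t in Ioo 0 s, f t := by
  rw [Measure.restrict_restrict_of_subset (Ioo_subset_Ioo_right hs)]

lemma unitVol_real_Ioo {s : ℝ} (hs : s ∈ Icc (0 : ℝ) 1) : unitVol.real (Ioo 0 s) = s := by
  rw [measureReal_restrict_apply measurableSet_Ioo,
    inter_eq_left.2 (Ioo_subset_Ioo_right hs.2), Real.volume_real_Ioo_of_le hs.1, sub_zero]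

lemma rr_eq_sInf_tail (f : ℝ → ℝ) {t : ℝ} (ht : 0 ≤ t) :
    rr f t = sInf {s | tail unitVol f s ≤ t} := by
  have h (s : ℝ) : volume {u ∈ Ioo (0 : ℝ) 1 | s < f u} = unitVol {u | s < f u} := by
    rw [Measure.restrict_apply' measurableSet_Ioo, inter_comm]
    rfl
  simp only [rr, h, ENNReal.le_ofReal_iff_toReal_le (measure_ne_top unitVol _) ht]
  rfl

lemma lt_rr_iff (hf : AEMeasurable f unitVol) {t : ℝ} (ht : t ∈ Ioo (0 : ℝ) 1) {s : ℝ} :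
    s < rr f t ↔ t < tail unitVol f s := by
  rw [rr_eq_sInf_tail f ht.1.le, lt_sInf_tail_le_iff hf ht]

lemma antitoneOn_rr (hf : AEMeasurable f unitVol) : AntitoneOn (rr f) (Ioo (0 : ℝ) 1) :=
  fun _ ha _ hb hab => le_of_forall_lt fun _ hs =>
    (lt_rr_iff hf ha).2 (hab.trans_lt ((lt_rr_iff hf hb).1 hs))

lemma aemeasurable_rr (hf : AEMeasurable f unitVol) : AEMeasurable (rr f) unitVol :=
  aemeasurable_restrict_of_antitoneOn measurableSet_Ioo (antitoneOn_rr hf)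

lemma tail_rr (hf : AEMeasurable f unitVol) : tail unitVol (rr f) = tail unitVol f := by
  funext s
  have hs := tail_mem_Icc (μ := unitVol) f s
  have h : {t | s < rr f t} =ᵐ[unitVol] Ioo 0 (tail unitVol f s) := by
    filter_upwards [ae_restrict_mem measurableSet_Ioo] with t ht
    exact propext ((lt_rr_iff hf ht).trans (and_iff_right ht.1).symm)
  rw [tail, measureReal_congr h, unitVol_real_Ioo hs]

lemma identDistrib_rr (hf : AEMeasurable f unitVol) : IdentDistrib (rr f) f unitVol unitVol :=
  identDistrib_of_tail_eq (aemeasurable_rr hf) hf (tail_rr hf)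

lemma excess_rr (hf : AEMeasurable f unitVol) (c : ℝ) :
    excess unitVol (rr f) c = excess unitVol f c :=
  ((identDistrib_rr hf).comp (u := fun v => max (v - c) 0) (by fun_prop)).integral_eq

lemma integrable_rr (hf : Integrable f unitVol) : Integrable (rr f) unitVol :=
  (identDistrib_rr hf.aemeasurable).integrable_iff.2 hf

lemma integral_rr (hf : AEMeasurable f unitVol) : ∫ t, rr f t ∂unitVol = ∫ t, f t ∂unitVol :=
  (identDistrib_rr hf).integral_eq

lemma integral_Ioo_rr_le (hf : Integrable f unitVol) (c : ℝ) {s : ℝ} (hs : s ∈ Icc (0 : ℝ) 1) :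
    ∫ t in Ioo 0 s, rr f t ≤ excess unitVol f c + c * s := by
  have h := setIntegral_le_excess_add (integrable_rr hf) c (Ioo 0 s)
  rwa [setIntegral_unitVol_Ioo _ hs.2, excess_rr hf.aemeasurable, unitVol_real_Ioo hs] at h

lemma integral_Ioo_rr_eq (hf : Integrable f unitVol) {c s : ℝ} (hs : s ∈ Icc (0 : ℝ) 1)
    (hge : ∀ t ∈ Ioo (0 : ℝ) 1, t < s → c ≤ rr f t)
    (hle : ∀ t ∈ Ioo (0 : ℝ) 1, s ≤ t → rr f t ≤ c) :
    ∫ t in Ioo 0 s, rr f t = excess unitVol f c + c * s := by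
  have hmem : ∀ᵐ t ∂unitVol, t ∈ Ioo (0 : ℝ) 1 := ae_restrict_mem measurableSet_Ioo
  have h := setIntegral_eq_excess_add (c := c) (integrable_rr hf) (measurableSet_Ioo (a := 0))
    (hmem.mono fun t ht hts => hge t ht hts.2)
    (hmem.mono fun t ht hts => hle t ht (not_lt.1 fun hlt => hts ⟨ht.1, hlt⟩))
  rwa [setIntegral_unitVol_Ioo _ hs.2, excess_rr hf.aemeasurable, unitVol_real_Ioo hs] at h

lemma integral_Ioo_tail_rr (hf : Integrable f unitVol) (c : ℝ) :
    ∫ t in Ioo 0 (tail unitVol f c), rr f t =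
      excess unitVol f c + c * tail unitVol f c :=
  integral_Ioo_rr_eq hf (tail_mem_Icc f c)
    (fun _ ht hlt => ((lt_rr_iff hf.aemeasurable ht).2 hlt).le)
    (fun _ ht hle => not_lt.1 fun h => hle.not_gt ((lt_rr_iff hf.aemeasurable ht).1 h))

lemma integral_Ioo_rr (hf : Integrable f unitVol) {s : ℝ} (hs : s ∈ Ioo (0 : ℝ) 1) :
    ∫ t in Ioo 0 s, rr f t = excess unitVol f (rr f s) + rr f s * s :=
  integral_Ioo_rr_eq hf (Ioo_subset_Icc_self hs)
    (fun _ ht hlt => antitoneOn_rr hf.aemeasurable ht hs hlt.le)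
    (fun _ ht hle => antitoneOn_rr hf.aemeasurable hs ht hle)

lemma maj_iff_excess_le (hf : Integrable f unitVol) (hg : Integrable g unitVol) :
    Maj g f ↔ (∀ c, excess unitVol g c ≤ excess unitVol f c) ∧
      ∫ t, g t ∂unitVol = ∫ t, f t ∂unitVol := by
  have hone : (∫ t, rr g t ∂unitVol) = ∫ t, rr f t ∂unitVol ↔
      ∫ t, g t ∂unitVol = ∫ t, f t ∂unitVol := by
    rw [integral_rr hf.aemeasurable, integral_rr hg.aemeasurable]
  refine (and_congr_right' hone).trans <|
    and_congr_left fun hint => ⟨fun h c => ?_, fun h s hs => ?_⟩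
  · have hs := tail_mem_Icc (μ := unitVol) g c
    have hle : ∫ t in Ioo 0 (tail unitVol g c), rr g t ≤
        ∫ t in Ioo 0 (tail unitVol g c), rr f t := by
      rcases hs.2.lt_or_eq with hlt | heq
      · exact h _ ⟨hs.1, hlt⟩
      · rw [heq]
        exact (hone.2 hint).le
    linarith [integral_Ioo_tail_rr hg c, integral_Ioo_rr_le hf c hs]
  · rcases hs.1.eq_or_lt with rfl | hpos
    · simp
    · linarith [h (rr f s), integral_Ioo_rr hf ⟨hpos, hs.2⟩,
        integral_Ioo_rr_le hg (rr f s) (Ico_subset_Icc_self hs)]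

lemma mem_Omega_iff {x y : ℝ → ℝ} (hy : Integrable y unitVol) :
    x ∈ Omega y ↔ Integrable x unitVol ∧
      (∀ c, excess unitVol x c ≤ excess unitVol y c) ∧ ∫ u, x u ∂unitVol = ∫ u, y u ∂unitVol :=
  and_congr_right fun hx => maj_iff_excess_le hy hx

lemma rr_eq_of_excess_eq (hf : Integrable f unitVol) (hg : Integrable g unitVol)
    (h : excess unitVol f = excess unitVol g) {t : ℝ} (ht : 0 ≤ t) : rr f t = rr g t := by
  rw [rr_eq_sInf_tail f ht, rr_eq_sInf_tail g ht, tail_eq_of_excess_eq hf hg h]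

lemma excess_eq_of_rr_eq (hf : AEMeasurable f unitVol) (hg : AEMeasurable g unitVol)
    (h : ∀ t ∈ Ioo (0 : ℝ) 1, rr f t = rr g t) : excess unitVol f = excess unitVol g := by
  funext c
  rw [← excess_rr hf, ← excess_rr hg]
  exact excess_congr_ae ((ae_restrict_mem measurableSet_Ioo).mono h) c

lemma ExtremePt.excess_eq {x y : ℝ → ℝ} (hy : Integrable y unitVol) (h : ExtremePt (Omega y) x) :
    excess unitVol x = excess unitVol y := by
  obtain ⟨hx, hle, hint⟩ := (mem_Omega_iff hy).1 h.1
  funext c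
  by_contra hne
  obtain ⟨d, hd, hd₀, hdne, hadd, hsub⟩ :=
    exists_perturbation_of_excess_lt hx hy hint hle ((hle c).lt_of_ne hne)
  have hmem_add : x + d ∈ Omega y := (mem_Omega_iff hy).2 ⟨hx.add hd, hadd, by
    simp only [Pi.add_apply]
    rw [integral_add hx hd, hd₀, add_zero, hint]⟩
  have hmem_sub : x + -d ∈ Omega y := (mem_Omega_iff hy).2 ⟨hx.add hd.neg, hsub, by
    simp only [Pi.add_apply, Pi.neg_apply, ← sub_eq_add_neg]
    rw [integral_sub hx hd, hd₀, sub_zero, hint]⟩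
  refine hdne ?_
  filter_upwards [h.2 _ hmem_add _ hmem_sub (.of_forall fun u => by
    simp only [Pi.add_apply, Pi.neg_apply]; ring)] with u hu
  simpa [self_eq_neg] using hu

lemma extremePt_of_excess_eq {x y : ℝ → ℝ} (hy : Integrable y unitVol) (hx : x ∈ Omega y)
    (h : excess unitVol x = excess unitVol y) : ExtremePt (Omega y) x := by
  refine ⟨hx, fun x₁ h₁ x₂ h₂ hmid => ?_⟩
  obtain ⟨hint₁, hle₁, -⟩ := (mem_Omega_iff hy).1 h₁
  obtain ⟨hint₂, hle₂, -⟩ := (mem_Omega_iff hy).1 h₂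
  refine ae_eq_of_excess_add_excess_le hint₁ hint₂ fun c => ?_
  rw [← excess_congr_ae hmid c, h]
  linarith [hle₁ c, hle₂ c]

end Rearrangement

theorem extreme_iff_equimeasurable_atomless (y : ℝ → ℝ)
    (hy : IntegrableOn y (Ioo (0:ℝ) 1)) (x : ℝ → ℝ) (hx : x ∈ Omega y) :
    ExtremePt (Omega y) x ↔ ∀ t ∈ Ico (0:ℝ) 1, rr x t = rr y t := by
  constructor
  · intro h t ht
    exact rr_eq_of_excess_eq hx.1 hy (h.excess_eq hy) ht.1
  · intro h
    have hexcess : excess unitVol x = excess unitVol y :=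
      excess_eq_of_rr_eq hx.1.aemeasurable hy.aemeasurable fun t ht => h t (Ioo_subset_Ico_self ht)
    exact extremePt_of_excess_eq hy hx hexcess
end
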